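/- Let f be a polynomial of degree at most k on ℝ^n (n ≥ 3) and β a multi-index with |β| ≥ k+2. Then for any z and ε > 0 with the closed ball B_ε(z) contained in B_R, and any x ∈ B_ε(z), one has ∫_{B_R \ B_ε(z)} D_x^β Γ(x−y) f(y) dy = 0. -/

import Mathlib

open MeasureTheory Metric

noncomputable section

def sphArea (n : ℕ) : ℝ :=
  (μH[(n : ℝ) - 1] (sphere (0 : EuclideanSpace ℝ (Fin n)) 1)).toReal

def fundSol (n : ℕ) (x : EuclideanSpace ℝ (Fin n)) : ℝ :=
  (1 / (n * (2 - (n : ℝ)) * sphArea n)) * ‖x‖ ^ ((2 : ℝ) - n)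

def ee {n : ℕ} (i : Fin n) : EuclideanSpace ℝ (Fin n) := EuclideanSpace.single i 1

/-!
Let `f` have degree less than `d`, and let `K` be even and positively homogeneous of degree `2 - dim
E`, as the fundamental solution is. In polar coordinates at `x`, the weight `|r| ^ (dim E - 1)` and
the homogeneity of `K` leave a factor `|r|`, so that the potential `∫ f y * K (x - y)` over a ball
containing `x` is an average over the unit vectors `ξ` of `K ξ` times the integral of `|r| * f (x +
r • ξ)` over the chord of direction `ξ` through `x`. With `f (x + r • ξ) = ∑ a_j(x, ξ) * r ^ j`,
this integral is a combination of the `a_j(x, ξ) * (s ^ (j + 2) + t ^ (j + 2))`, where `s < 0 < t`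
are the endpoints of the chord. By Vieta, `s + t` and `s * t` are polynomials in `x` of degrees 1
and 2, hence `s ^ (j + 2) + t ^ (j + 2)` has degree at most `j + 2`, and its part of degree `j + 2`
does not depend on the ball. In the difference of two balls these leading parts cancel, so the
potential of `f` on the shell is on the inner ball a polynomial of degree at most `d`. More than `d`
derivatives under the integral sign annihilate it.
-/

open Module Polynomial Set Topology
open scoped ContDiff

section PolynomialMaps

variable {E F G H A : Type*} [NormedAddCommGroup E] [NormedSpace ℝ E]
  [NormedAddCommGroup F] [NormedSpace ℝ F] [NormedAddCommGroup G] [NormedSpace ℝ G]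
  [NormedAddCommGroup H] [NormedSpace ℝ H] [NormedCommRing A] [NormedAlgebra ℝ A]

/-- `HasDegreeLT d f` says that `f` is a polynomial map of degree less than `d` between normed
spaces. To have a notion that needs neither coordinates nor coefficients, it is encoded as: `f` is
smooth and its derivatives of order at least `d` vanish identically. -/
structure HasDegreeLT (d : ℕ) (f : E → F) : Prop where
  contDiff : ContDiff ℝ ∞ f
  iteratedFDeriv_eq_zero : ∀ i, d ≤ i → ∀ x, iteratedFDeriv ℝ i f x = 0

namespace HasDegreeLT

variable {d e : ℕ} {f g : E → F}

theorem mono (hf : HasDegreeLT d f) (hde : d ≤ e) : HasDegreeLT e f :=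
  ⟨hf.contDiff, fun i hi => hf.iteratedFDeriv_eq_zero i (hde.trans hi)⟩

theorem eq_zero (hf : HasDegreeLT 0 f) (x : E) : f x = 0 := by
  rw [← norm_eq_zero, ← norm_iteratedFDeriv_zero (𝕜 := ℝ) (f := f),
    hf.iteratedFDeriv_eq_zero 0 le_rfl, norm_zero]

theorem zero : HasDegreeLT 0 (fun _ : E => (0 : F)) :=
  ⟨contDiff_const, fun i _ x => by simp⟩

theorem const (c : F) : HasDegreeLT 1 (fun _ : E => c) :=
  ⟨contDiff_const, fun i hi x => by simp [iteratedFDeriv_const_of_ne (by lia : i ≠ 0)]⟩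

theorem add (hf : HasDegreeLT d f) (hg : HasDegreeLT d g) :
    HasDegreeLT d (fun x => f x + g x) :=
  ⟨hf.contDiff.add hg.contDiff, fun i hi x => by
    rw [fun_iteratedFDeriv_add_apply (hf.contDiff.of_le (mod_cast le_top)).contDiffAt
      (hg.contDiff.of_le (mod_cast le_top)).contDiffAt, hf.iteratedFDeriv_eq_zero i hi,
      hg.iteratedFDeriv_eq_zero i hi, add_zero]⟩

theorem continuousLinearMap_comp (L : F →L[ℝ] G) (hf : HasDegreeLT d f) :
    HasDegreeLT d (fun x => L (f x)) :=
  ⟨L.contDiff.comp hf.contDiff, fun i hi x => by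
    have chain := L.iteratedFDeriv_comp_left (hf.contDiff.contDiffAt (x := x)) (i := i)
      (mod_cast le_top)
    rw [hf.iteratedFDeriv_eq_zero i hi] at chain
    refine chain.trans ?_
    ext v
    simp⟩

theorem algebraMap_comp {f : E → ℝ} (hf : HasDegreeLT d f) :
    HasDegreeLT d (fun x => algebraMap ℝ A (f x)) :=
  hf.continuousLinearMap_comp (algebraMapCLM ℝ A)

theorem const_smul (c : ℝ) (hf : HasDegreeLT d f) : HasDegreeLT d (fun x => c • f x) :=
  hf.continuousLinearMap_comp (c • ContinuousLinearMap.id ℝ F)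

theorem sub (hf : HasDegreeLT d f) (hg : HasDegreeLT d g) :
    HasDegreeLT d (fun x => f x - g x) := by
  simpa [sub_eq_add_neg] using hf.add (hg.const_smul (-1))

theorem sum {ι : Type*} {s : Finset ι} {f : ι → E → F} (hf : ∀ i ∈ s, HasDegreeLT d (f i)) :
    HasDegreeLT d (fun x => ∑ i ∈ s, f i x) := by
  classical
  induction s using Finset.induction_on with
  | empty => simpa using zero.mono (Nat.zero_le d)
  | insert i s hi ih =>
    simp only [Finset.sum_insert hi]
    exact (hf i (s.mem_insert_self i)).add (ih fun j hj => hf j (Finset.mem_insert_of_mem hj))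

theorem fderiv (hf : HasDegreeLT d f) : HasDegreeLT (d - 1) (fderiv ℝ f) :=
  ⟨hf.contDiff.fderiv_right (by simp), fun i hi x => by
    rw [← norm_eq_zero, norm_iteratedFDeriv_fderiv, hf.iteratedFDeriv_eq_zero _ (by lia),
      norm_zero]⟩

theorem of_fderiv (hf : ContDiff ℝ ∞ f) (hf' : HasDegreeLT d (_root_.fderiv ℝ f)) :
    HasDegreeLT (d + 1) f :=
  ⟨hf, fun i hi x => by
    obtain ⟨i, rfl⟩ := Nat.exists_eq_add_of_le' hi
    rw [← norm_eq_zero, ← add_assoc, ← norm_iteratedFDeriv_fderiv,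
      hf'.iteratedFDeriv_eq_zero _ (by lia), norm_zero]⟩

theorem continuousLinearMap (L : E →L[ℝ] F) : HasDegreeLT 2 L :=
  of_fderiv L.contDiff (by
    rw [show _root_.fderiv ℝ L = fun _ => L from funext fun x => L.fderiv]
    exact const L)

-- Every term of the Leibniz rule has a factor differentiated too often.
theorem bilinear (B : F →L[ℝ] G →L[ℝ] H) {f : E → F} {g : E → G} (hf : HasDegreeLT d f)
    (hg : HasDegreeLT e g) : HasDegreeLT (d + e - 1) (fun x => B (f x) (g x)) where
  contDiff := B.isBoundedBilinearMap.contDiff.comp (hf.contDiff.prodMk hg.contDiff)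
  iteratedFDeriv_eq_zero i hi x := by
    have leibniz := B.norm_iteratedFDeriv_le_of_bilinear hf.contDiff hg.contDiff x (n := i)
      (mod_cast le_top)
    rw [Finset.sum_eq_zero, mul_zero] at leibniz
    · exact norm_le_zero_iff.1 leibniz
    · intro j _
      rcases le_or_gt d j with hj | hj
      · simp [hf.iteratedFDeriv_eq_zero j hj]
      · simp [hg.iteratedFDeriv_eq_zero (i - j) (by lia)]

theorem mul {f g : E → A} (hf : HasDegreeLT d f) (hg : HasDegreeLT e g) :
    HasDegreeLT (d + e - 1) (fun x => f x * g x) :=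
  hf.bilinear (ContinuousLinearMap.mul ℝ A) hg

theorem pow {f : E → A} (hf : HasDegreeLT (d + 1) f) (n : ℕ) :
    HasDegreeLT (n * d + 1) (fun x => f x ^ n) := by
  induction n with
  | zero => simpa using const 1
  | succ n ih => simpa only [pow_succ] using (ih.mul hf).mono (by lia)

theorem prod {ι : Type*} {s : Finset ι} {d : ι → ℕ} {f : ι → E → A}
    (hf : ∀ i ∈ s, HasDegreeLT (d i + 1) (f i)) :
    HasDegreeLT (∑ i ∈ s, d i + 1) (fun x => ∏ i ∈ s, f i x) := by
  classical
  induction s using Finset.induction_on with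
  | empty => simpa using const 1
  | insert i s hi ih =>
    simp only [Finset.sum_insert hi, Finset.prod_insert hi]
    exact ((hf i (s.mem_insert_self i)).mul
      (ih fun j hj => hf j (Finset.mem_insert_of_mem hj))).mono (by lia)

theorem mvPolynomial_eval {ι : Type*} (ℓ : ι → E →L[ℝ] ℝ) (p : MvPolynomial ι ℝ) :
    HasDegreeLT (p.totalDegree + 1) (fun x => p.eval fun i => ℓ i x) := by
  simp only [MvPolynomial.eval_eq]
  refine sum fun s hs => const_smul _ ((prod (d := s) fun i _ => ?_).mono
    (Nat.succ_le_succ (MvPolynomial.le_totalDegree hs)))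
  simpa using (continuousLinearMap (ℓ i)).pow (s i)

end HasDegreeLT

end PolynomialMaps

section DicksonPolynomials

variable {R S E A : Type*} [CommRing R] [CommRing S] [NormedAddCommGroup E] [NormedSpace ℝ E]
  [NormedCommRing A] [NormedAlgebra ℝ A]

theorem eval_add_dickson_one_mul (a b : R) (n : ℕ) :
    (dickson 1 (a * b) n).eval (a + b) = a ^ n + b ^ n := by
  induction n using Nat.twoStepInduction with
  | zero => norm_num
  | one => simp
  | more n ih ih' =>
    simp only [dickson_add_two, eval_sub, eval_mul, eval_X, eval_C, ih, ih']
    ring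

theorem map_eval_dickson (φ : R →+* S) (s q : R) (k n : ℕ) :
    φ ((dickson k q n).eval s) = (dickson k (φ q) n).eval (φ s) := by
  rw [← map_dickson, eval_map, eval₂_at_apply]

theorem HasDegreeLT.eval_dickson {s q : E → A} (hs : HasDegreeLT 2 s) (hq : HasDegreeLT 3 q)
    (k n : ℕ) : HasDegreeLT (n + 1) (fun x => (dickson k (q x) n).eval (s x)) := by
  induction n using Nat.twoStepInduction with
  | zero => simpa using const (3 - k : A)
  | one => simpa using hs
  | more n ih ih' =>
    simp only [dickson_add_two, eval_sub, eval_mul, eval_X, eval_C]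
    exact ((hs.mul ih').mono (by lia)).sub ((hq.mul ih).mono (by lia))

-- In degree `n`, the Dickson polynomial depends only on the leading parts of `s` and `q`.
theorem HasDegreeLT.eval_dickson_sub {s s' q q' : E → A} (hs : HasDegreeLT 2 s)
    (hs' : HasDegreeLT 2 s') (hq : HasDegreeLT 3 q) (hq' : HasDegreeLT 3 q')
    (hss' : HasDegreeLT 1 (fun x => s x - s' x)) (hqq' : HasDegreeLT 2 (fun x => q x - q' x))
    (k n : ℕ) :
    HasDegreeLT n
      (fun x => (dickson k (q x) n).eval (s x) - (dickson k (q' x) n).eval (s' x)) := by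
  induction n using Nat.twoStepInduction with
  | zero => simpa using zero
  | one => simpa using hss'
  | more n ih ih' =>
    have leading_s := (hss'.mul (hs.eval_dickson hq k (n + 1))).mono (e := n + 2) (by lia)
    have lower_s := (hs'.mul ih').mono (e := n + 2) (by lia)
    have leading_q := (hqq'.mul (hs.eval_dickson hq k n)).mono (e := n + 2) (by lia)
    have lower_q := (hq'.mul ih).mono (e := n + 2) (by lia)
    convert (leading_s.add lower_s).sub (leading_q.add lower_q) using 2 with x
    simp only [dickson_add_two, eval_sub, eval_mul, eval_X, eval_C]
    ring

end DicksonPolynomials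

section RadialExpansion

variable {E : Type*} [NormedAddCommGroup E] [NormedSpace ℝ E] [FiniteDimensional ℝ E]

/-- The radial derivative: the total derivative at a point of a family of functions on the unit
sphere is sent to the function whose value at `ξ` is the derivative of the value at `ξ` in the
direction `ξ`. -/
def radialDeriv : (E →L[ℝ] C(sphere (0 : E) 1, ℝ)) →L[ℝ] C(sphere (0 : E) 1, ℝ) where
  toFun L := ⟨fun ξ => L ξ ξ, by fun_prop⟩
  map_add' _ _ := rfl
  map_smul' _ _ := rfl
  cont := ContinuousMap.continuous_of_continuous_uncurry _ (by
    simp only [Function.uncurry_def, ContinuousMap.coe_mk]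
    fun_prop)

theorem hasDerivAt_comp_add_smul {g : E → C(sphere (0 : E) 1, ℝ)} (hg : Differentiable ℝ g) (x : E)
    (ξ : sphere (0 : E) 1) (t : ℝ) :
    HasDerivAt (fun t : ℝ => g (x + t • (ξ : E)) ξ)
      (radialDeriv (fderiv ℝ g (x + t • (ξ : E))) ξ) t := by
  have line : HasDerivAt (fun t : ℝ => x + t • (ξ : E)) (ξ : E) t := by
    simpa using ((hasDerivAt_id t).smul_const (ξ : E)).const_add x
  exact (ContinuousMap.evalCLM ℝ ξ).hasFDerivAt.comp_hasDerivAt t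
    ((hg _).hasFDerivAt.comp_hasDerivAt t line)

-- Taylor's formula; the coefficients are found by integrating those of the radial derivative.
theorem HasDegreeLT.exists_radial_expansion {d : ℕ} {g : E → C(sphere (0 : E) 1, ℝ)}
    (hg : HasDegreeLT d g) :
    ∃ a : ℕ → E → C(sphere (0 : E) 1, ℝ), (∀ j, HasDegreeLT (d - j) (a j)) ∧
      ∀ x (ξ : sphere (0 : E) 1) (t : ℝ),
        g (x + t • (ξ : E)) ξ = ∑ j ∈ Finset.range d, a j x ξ * t ^ j := by
  induction d generalizing g with
  | zero => exact ⟨fun _ _ => 0, fun j => zero.mono (Nat.zero_le _), fun x ξ t => by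
      simp [hg.eq_zero]⟩
  | succ d ih =>
    obtain ⟨b, hb, hb_sum⟩ := ih (hg.fderiv.continuousLinearMap_comp radialDeriv)
    let a : ℕ → E → C(sphere (0 : E) 1, ℝ)
      | 0 => g
      | j + 1 => fun x => (j + 1 : ℝ)⁻¹ • b j x
    refine ⟨a, ?_, fun x ξ t => ?_⟩
    · rintro (_ | j)
      · exact hg
      · exact ((hb j).const_smul _).mono (by lia)
    have deriv_sum (t : ℝ) : HasDerivAt (fun t => ∑ j ∈ Finset.range (d + 1), a j x ξ * t ^ j)
        (∑ j ∈ Finset.range d, b j x ξ * t ^ j) t := by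
      refine (HasDerivAt.fun_sum (u := Finset.range (d + 1)) fun j _ =>
        (hasDerivAt_pow j t).const_mul (a j x ξ)).congr_deriv ?_
      have term_eq (j : ℕ) : a (j + 1) x ξ * ((j + 1 : ℕ) * t ^ j) = b j x ξ * t ^ j := by
        simp only [a, ContinuousMap.coe_smul, Pi.smul_apply, smul_eq_mul]
        push_cast
        field_simp
      simp only [Finset.sum_range_succ', Nat.add_sub_cancel, term_eq, CharP.cast_eq_zero, zero_mul,
        mul_zero, add_zero]
    have deriv_sub (t : ℝ) := (hasDerivAt_comp_add_smul
      (hg.contDiff.differentiable (by simp)) x ξ t).sub (deriv_sum t)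
    have constant := is_const_of_deriv_eq_zero (fun t => (deriv_sub t).differentiableAt)
      (fun t => by rw [(deriv_sub t).deriv, hb_sum, sub_self]) t 0
    simpa [Finset.sum_range_succ', a, sub_eq_zero] using constant

end RadialExpansion

section Chords

variable {E : Type*} [NormedAddCommGroup E] [InnerProductSpace ℝ E]
  {d : ℕ} {c x : E} {ρ : ℝ}

/-- Twice the restriction to the unit sphere of the linear form `⟪v, ·⟫`. For `v = c - x` its value
at `ξ` is the sum of the parameters at which the line `r ↦ x + r • ξ` meets a sphere centered at
`c`. -/
def sphereInner : E →L[ℝ] C(sphere (0 : E) 1, ℝ) where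
  toFun v := ⟨fun ξ => 2 * inner ℝ v ξ, by fun_prop⟩
  map_add' v w := by ext; simp [inner_add_left, mul_add]
  map_smul' r v := by ext; simp [inner_smul_left, mul_left_comm]
  cont := ContinuousMap.continuous_of_continuous_uncurry _ (by
    simp only [Function.uncurry_def, ContinuousMap.coe_mk]
    fun_prop)

/-- The sum of the `n`-th powers of the two parameters at which the line `r ↦ x + r • ξ` meets the
sphere `sphere c ρ`, as a function of the unit vector `ξ`. By Vieta it is a Dickson polynomial in
the sum and the product of these parameters. -/
def chordPowerSum (c : E) (ρ : ℝ) (n : ℕ) (x : E) : C(sphere (0 : E) 1, ℝ) :=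
  (dickson 1 (algebraMap ℝ _ (‖x - c‖ ^ 2 - ρ ^ 2)) n).eval (sphereInner (c - x))

theorem chordPowerSum_apply {n : ℕ} {ξ : sphere (0 : E) 1} {s t : ℝ}
    (add_eq : s + t = 2 * inner ℝ (c - x) ξ) (mul_eq : s * t = ‖x - c‖ ^ 2 - ρ ^ 2) :
    chordPowerSum c ρ n x ξ = s ^ n + t ^ n := by
  rw [← eval_add_dickson_one_mul, add_eq, mul_eq]
  exact map_eval_dickson (ContinuousMap.evalAlgHom ℝ ℝ ξ).toRingHom _ _ _ _

theorem exists_line_preimage_ball_eq_Ioo (hx : x ∈ ball c ρ) {ξ : E} (hξ : ‖ξ‖ = 1) :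
    ∃ s t : ℝ, s < 0 ∧ 0 < t ∧ s + t = 2 * inner ℝ (c - x) ξ ∧ s * t = ‖x - c‖ ^ 2 - ρ ^ 2 ∧
      {r : ℝ | x + r • ξ ∈ ball c ρ} = Ioo s t := by
  have x_near : ‖x - c‖ < ρ := mem_ball_iff_norm.1 hx
  have ρ_pos : 0 < ρ := (norm_nonneg _).trans_lt x_near
  have prod_neg : ‖x - c‖ ^ 2 - ρ ^ 2 < 0 :=
    sub_neg.2 (pow_lt_pow_left₀ x_near (norm_nonneg _) two_ne_zero)
  set b := inner ℝ (c - x) ξ with hb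
  set q := ‖x - c‖ ^ 2 - ρ ^ 2
  set δ := √(b ^ 2 - q)
  have δ_sq : δ ^ 2 = b ^ 2 - q := Real.sq_sqrt (by nlinarith)
  have b_lt_δ : |b| < δ := Real.lt_sqrt_of_sq_lt (by rw [sq_abs]; linarith)
  obtain ⟨neg_lt, lt⟩ := abs_lt.1 b_lt_δ
  refine ⟨b - δ, b + δ, by linarith, by linarith, by ring, by linear_combination -δ_sq, ?_⟩
  ext r
  have dist_sq : ‖x + r • ξ - c‖ ^ 2 = r ^ 2 - 2 * b * r + ‖x - c‖ ^ 2 := by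
    rw [add_sub_right_comm, norm_add_sq_real, inner_smul_right, norm_smul, hξ, hb,
      ← neg_sub x c, inner_neg_left, Real.norm_eq_abs, mul_one, sq_abs]
    ring
  have shifted : |r - b| < δ ↔ r ∈ Ioo (b - δ) (b + δ) := by
    rw [abs_lt, mem_Ioo]; constructor <;> rintro ⟨h, h'⟩ <;> constructor <;> linarith
  rw [mem_ofPred_eq, mem_ball_iff_norm, ← shifted, ← sq_lt_sq₀ (norm_nonneg _) ρ_pos.le, dist_sq,
    ← sq_lt_sq₀ (abs_nonneg _) (Real.sqrt_nonneg _), sq_abs, δ_sq]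
  constructor <;> intro h <;> linarith

theorem hasDegreeLT_norm_sub_sq_sub_const (c : E) (a : ℝ) :
    HasDegreeLT 3 (fun x => ‖x - c‖ ^ 2 - a) := by
  have sub_c := (HasDegreeLT.continuousLinearMap (.id ℝ E)).sub
    ((HasDegreeLT.const c).mono one_le_two)
  have inner_self : HasDegreeLT 3 (fun x => inner ℝ (x - c) (x - c) - a) :=
    (sub_c.bilinear (innerSL ℝ) sub_c).sub ((HasDegreeLT.const a).mono (by lia))
  simpa only [real_inner_self_eq_norm_sq] using inner_self

theorem hasDegreeLT_norm_sub_sq_sub_norm_sub_sq (c c' : E) (a a' : ℝ) :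
    HasDegreeLT 2 (fun x => ‖x - c‖ ^ 2 - a - (‖x - c'‖ ^ 2 - a')) := by
  have affine := ((HasDegreeLT.continuousLinearMap (innerSL ℝ (2 • (c' - c)))).add
    ((HasDegreeLT.const (‖c‖ ^ 2 - ‖c'‖ ^ 2 - a + a')).mono one_le_two))
  convert affine using 2 with x
  simp only [norm_sub_sq_real, innerSL_apply_apply, two_smul, inner_add_left, inner_sub_left,
    real_inner_comm]
  ring

theorem integral_abs_mul_pow {s t : ℝ} (hs : s ≤ 0) (ht : 0 ≤ t) (j : ℕ) :
    ∫ r in Ioo s t, |r| * r ^ j = (j + 2 : ℝ)⁻¹ * (s ^ (j + 2) + t ^ (j + 2)) := by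
  have integrable (a b : ℝ) : IntervalIntegrable (fun r : ℝ => |r| * r ^ j) volume a b :=
    (by fun_prop : Continuous fun r : ℝ => |r| * r ^ j).intervalIntegrable a b
  have neg_part : ∫ r in s..0, |r| * r ^ j = ∫ r in s..0, -r ^ (j + 1) :=
    intervalIntegral.integral_congr fun r hr => by
      rw [uIcc_of_le hs] at hr
      simp only [abs_of_nonpos hr.2, pow_succ']
      ring
  have pos_part : ∫ r in 0..t, |r| * r ^ j = ∫ r in 0..t, r ^ (j + 1) :=
    intervalIntegral.integral_congr fun r hr => by
      rw [uIcc_of_le ht] at hr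
      simp only [abs_of_nonneg hr.1, pow_succ']
  rw [← integral_Ioc_eq_integral_Ioo, ← intervalIntegral.integral_of_le (hs.trans ht),
    ← intervalIntegral.integral_add_adjacent_intervals (integrable s 0) (integrable 0 t),
    neg_part, pos_part, intervalIntegral.integral_neg, integral_pow, integral_pow]
  push_cast
  field_simp
  ring

theorem integral_line_inter_ball {f : E → ℝ} {ξ : sphere (0 : E) 1} {a : ℕ → ℝ}
    (hf : ∀ r : ℝ, f (x + r • (ξ : E)) = ∑ j ∈ Finset.range d, a j * r ^ j) (hx : x ∈ ball c ρ) :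
    ∫ r in {r : ℝ | x + r • (ξ : E) ∈ ball c ρ}, |r| * f (x + r • (ξ : E)) =
      ∑ j ∈ Finset.range d, (j + 2 : ℝ)⁻¹ * (a j * chordPowerSum c ρ (j + 2) x ξ) := by
  obtain ⟨s, t, hs, ht, add_eq, mul_eq, chord⟩ :=
    exists_line_preimage_ball_eq_Ioo hx (norm_eq_of_mem_sphere ξ)
  rw [chord]
  simp only [hf, Finset.mul_sum]
  rw [integral_finsetSum _ fun j _ => (by fun_prop :
    Continuous fun r : ℝ => |r| * (a j * r ^ j)).integrableOn_Icc.mono_set Ioo_subset_Icc_self]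
  refine Finset.sum_congr rfl fun j _ => ?_
  simp only [mul_left_comm _ (a j)]
  rw [integral_const_mul, integral_abs_mul_pow hs.le ht.le, chordPowerSum_apply add_eq mul_eq]

theorem setIntegral_line_sdiff {f : E → ℝ} (hf : Continuous f) {c' : E} {ρ' : ℝ}
    (h_sub : ball c' ρ' ⊆ ball c ρ) (hx : x ∈ ball c' ρ') (ξ : sphere (0 : E) 1) :
    ∫ r in {r : ℝ | x + r • (ξ : E) ∈ ball c ρ \ ball c' ρ'}, |r| * f (x + r • (ξ : E)) =
      (∫ r in {r : ℝ | x + r • (ξ : E) ∈ ball c ρ}, |r| * f (x + r • (ξ : E))) -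
        ∫ r in {r : ℝ | x + r • (ξ : E) ∈ ball c' ρ'}, |r| * f (x + r • (ξ : E)) := by
  obtain ⟨s, t, -, -, -, -, chord⟩ :=
    exists_line_preimage_ball_eq_Ioo (h_sub hx) (norm_eq_of_mem_sphere ξ)
  have line : Continuous fun r : ℝ => x + r • (ξ : E) := by fun_prop
  have integrable : IntegrableOn (fun r : ℝ => |r| * f (x + r • (ξ : E)))
      {r : ℝ | x + r • (ξ : E) ∈ ball c ρ} := by
    rw [chord]
    exact (continuous_abs.mul (hf.comp line)).integrableOn_Icc.mono_set Ioo_subset_Icc_self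
  exact setIntegral_sdiff (isOpen_ball.preimage line).measurableSet integrable
    fun r hr => h_sub hr

variable [FiniteDimensional ℝ E]

theorem hasDegreeLT_sphereInner_sub (c : E) :
    HasDegreeLT 2 (fun x => sphereInner (c - x)) :=
  (((HasDegreeLT.const c).mono one_le_two).sub
    (.continuousLinearMap (.id ℝ E))).continuousLinearMap_comp sphereInner

theorem hasDegreeLT_chordPowerSum_sub (c c' : E) (ρ ρ' : ℝ) (n : ℕ) :
    HasDegreeLT n (fun x => chordPowerSum c ρ n x - chordPowerSum c' ρ' n x) := by
  refine HasDegreeLT.eval_dickson_sub (hasDegreeLT_sphereInner_sub c)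
    (hasDegreeLT_sphereInner_sub c')
    (hasDegreeLT_norm_sub_sq_sub_const c _).algebraMap_comp
    (hasDegreeLT_norm_sub_sq_sub_const c' _).algebraMap_comp ?_ ?_ 1 n
  · simpa [← map_sub] using HasDegreeLT.const (sphereInner (c - c'))
  · simpa only [map_sub] using (hasDegreeLT_norm_sub_sq_sub_norm_sub_sq c c' (ρ ^ 2)
      (ρ' ^ 2)).algebraMap_comp (A := C(sphere (0 : E) 1, ℝ))

theorem HasDegreeLT.exists_integral_line_inter_ball_sub {f : E → ℝ} (hf : HasDegreeLT d f)
    (c c' : E) (ρ ρ' : ℝ) :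
    ∃ Φ : E → C(sphere (0 : E) 1, ℝ), HasDegreeLT (d + 1) Φ ∧
      ∀ x ∈ ball c ρ ∩ ball c' ρ', ∀ ξ : sphere (0 : E) 1,
        (∫ r in {r : ℝ | x + r • (ξ : E) ∈ ball c ρ}, |r| * f (x + r • (ξ : E))) -
          ∫ r in {r : ℝ | x + r • (ξ : E) ∈ ball c' ρ'}, |r| * f (x + r • (ξ : E)) = Φ x ξ := by
  obtain ⟨a, ha, ha_sum⟩ :=
    (hf.algebraMap_comp (A := C(sphere (0 : E) 1, ℝ))).exists_radial_expansion
  refine ⟨fun x => ∑ j ∈ Finset.range d, (j + 2 : ℝ)⁻¹ •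
    (a j x * (chordPowerSum c ρ (j + 2) x - chordPowerSum c' ρ' (j + 2) x)), ?_, ?_⟩
  · refine HasDegreeLT.sum fun j hj => .const_smul _ ?_
    have := Finset.mem_range.1 hj
    exact ((ha j).mul (hasDegreeLT_chordPowerSum_sub c c' ρ ρ' (j + 2))).mono (by lia)
  · intro x hx ξ
    have expansion : ∀ r : ℝ, f (x + r • (ξ : E)) = _ := ha_sum x ξ
    rw [integral_line_inter_ball expansion hx.1, integral_line_inter_ball expansion hx.2,
      ← Finset.sum_sub_distrib]
    simp [mul_sub]

end Chords

section PolarCoordinates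

variable {E F : Type*} [NormedAddCommGroup E] [NormedSpace ℝ E] [FiniteDimensional ℝ E]
  [MeasurableSpace E] [BorelSpace E] [NormedAddCommGroup F]

theorem integrable_smul_sphere_prod_iff (μ : Measure E) [μ.IsAddHaarMeasure]
    {G : E → F} :
    Integrable (fun p : sphere (0 : E) 1 × Ioi (0 : ℝ) => G (p.2.1 • p.1.1))
      (μ.toSphere.prod (.volumeIoiPow (finrank ℝ E - 1))) ↔ IntegrableOn G {0}ᶜ μ := by
  rw [← μ.measurePreserving_homeomorphUnitSphereProd.integrable_comp_emb
    (homeomorphUnitSphereProd E).measurableEmbedding,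
    integrableOn_iff_comap_subtypeVal (by measurability)]
  refine integrable_congr (.of_forall fun x => congrArg G ?_)
  exact congrArg Subtype.val ((homeomorphUnitSphereProd E).symm_apply_apply x)

variable [NormedSpace ℝ F]

theorem integral_volumeIoiPow (k : ℕ) (h : ℝ → F) :
    ∫ r : Ioi (0 : ℝ), h r ∂Measure.volumeIoiPow k = ∫ r in Ioi 0, r ^ k • h r := by
  simp only [Measure.volumeIoiPow, ENNReal.ofReal]
  rw [integral_withDensity_eq_integral_smul (measurable_subtype_coe.pow_const _).real_toNNReal,
    integral_subtype_comap measurableSet_Ioi fun r => (r ^ k).toNNReal • h r]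
  refine setIntegral_congr_fun measurableSet_Ioi fun r hr => ?_
  simp only [NNReal.smul_def, Real.coe_toNNReal _ (pow_nonneg hr.out.le k)]

theorem integrable_volumeIoiPow_iff {k : ℕ} {h : ℝ → F} :
    Integrable (fun r : Ioi (0 : ℝ) => h r) (Measure.volumeIoiPow k) ↔
      IntegrableOn (fun r => r ^ k • h r) (Ioi 0) := by
  rw [integrableOn_iff_comap_subtypeVal measurableSet_Ioi, Measure.volumeIoiPow,
    integrable_withDensity_iff_integrable_smul' (by fun_prop) (by simp)]
  refine integrable_congr (.of_forall fun r => ?_)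
  simp [ENNReal.toReal_ofReal (pow_nonneg r.2.out.le k)]

theorem integral_Ioi_add_integral_Ioi_neg {h : ℝ → F} (h_pos : IntegrableOn h (Ioi 0))
    (h_neg : IntegrableOn (fun r => h (-r)) (Ioi 0)) :
    (∫ r in Ioi 0, h r) + ∫ r in Ioi 0, h (-r) = ∫ r, h r := by
  have h_Iic : IntegrableOn h (Iic 0) := by
    rw [integrableOn_Iic_iff_integrableOn_Iio]
    simpa using IntegrableOn.comp_neg_Iio (c := 0) (f := fun r => h (-r)) (by simpa using h_neg)
  rw [integral_comp_neg_Ioi, neg_zero, add_comm,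
    intervalIntegral.integral_Iic_add_Ioi h_Iic h_pos]

variable {μ : Measure E} [μ.IsAddHaarMeasure] {G : E → F}

theorem ae_integrableOn_ray (hG : Integrable G μ) :
    ∀ᵐ ξ ∂μ.toSphere,
      IntegrableOn (fun r : ℝ => r ^ (finrank ℝ E - 1) • G (r • ξ.1)) (Ioi 0) := by
  filter_upwards [((integrable_smul_sphere_prod_iff μ).2 hG.integrableOn).prod_right_ae] with ξ hξ
  exact integrable_volumeIoiPow_iff.1 hξ

variable [Nontrivial E]

theorem integral_eq_integral_sphere_integral_ray (hG : Integrable G μ) :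
    ∫ w, G w ∂μ =
      ∫ ξ, (∫ r in Ioi (0 : ℝ), r ^ (finrank ℝ E - 1) • G (r • ξ.1)) ∂μ.toSphere :=
  calc ∫ w, G w ∂μ
    _ = ∫ x : ({0}ᶜ : Set E), G x ∂μ.comap (↑) := by
      rw [integral_subtype_comap (measurableSet_singleton _).compl G, restrict_compl_singleton]
    _ = ∫ p : sphere (0 : E) 1 × Ioi (0 : ℝ), G (p.2.1 • p.1.1)
          ∂μ.toSphere.prod (.volumeIoiPow (finrank ℝ E - 1)) := by
      rw [← μ.measurePreserving_homeomorphUnitSphereProd.integral_comp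
        (homeomorphUnitSphereProd E).measurableEmbedding]
      refine integral_congr_ae (.of_forall fun x => congrArg G ?_)
      exact congrArg Subtype.val ((homeomorphUnitSphereProd E).symm_apply_apply x).symm
    _ = _ := by
      rw [integral_prod _ ((integrable_smul_sphere_prod_iff μ).2 hG.integrableOn)]
      exact integral_congr_ae (.of_forall fun ξ => integral_volumeIoiPow _ fun r => G (r • ξ.1))

theorem integral_eq_integral_sphere_integral_line (hG : Integrable G μ) :
    ∫ w, G w ∂μ =
      (2⁻¹ : ℝ) • ∫ ξ, (∫ r : ℝ, |r| ^ (finrank ℝ E - 1) • G (r • ξ.1)) ∂μ.toSphere := by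
  have line : ∀ᵐ ξ ∂μ.toSphere,
      ∫ r in Ioi (0 : ℝ), r ^ (finrank ℝ E - 1) • (G (r • ξ.1) + G (-(r • ξ.1))) =
        ∫ r : ℝ, |r| ^ (finrank ℝ E - 1) • G (r • ξ.1) := by
    filter_upwards [ae_integrableOn_ray hG, ae_integrableOn_ray hG.comp_neg] with ξ pos neg
    have abs_pos : EqOn (fun r : ℝ => |r| ^ (finrank ℝ E - 1) • G (r • ξ.1))
        (fun r => r ^ (finrank ℝ E - 1) • G (r • ξ.1)) (Ioi 0) := fun r hr => by
      simp only [abs_of_pos hr.out]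
    have abs_neg : EqOn (fun r : ℝ => |-r| ^ (finrank ℝ E - 1) • G (-r • ξ.1))
        (fun r => r ^ (finrank ℝ E - 1) • G (-(r • ξ.1))) (Ioi 0) := fun r hr => by
      simp only [_root_.abs_neg, abs_of_pos hr.out, neg_smul]
    rw [← integral_Ioi_add_integral_Ioi_neg (pos.congr_fun abs_pos.symm measurableSet_Ioi)
      (neg.congr_fun abs_neg.symm measurableSet_Ioi),
      setIntegral_congr_fun measurableSet_Ioi abs_pos,
      setIntegral_congr_fun measurableSet_Ioi abs_neg, ← integral_add pos neg]
    simp only [smul_add]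
  rw [← integral_congr_ae line,
    ← integral_eq_integral_sphere_integral_ray (G := fun w => G w + G (-w)) (hG.add hG.comp_neg),
    integral_add hG hG.comp_neg, integral_neg_eq_self, ← two_smul ℝ, smul_smul,
    inv_mul_cancel₀ two_ne_zero, one_smul]

end PolarCoordinates

section DifferentiationUnderTheIntegral

variable {E F : Type*} [NormedAddCommGroup E] [NormedAddCommGroup F] {g : E → F} {Ω : Set E}
  {x c z : E} {R ε : ℝ}

theorem continuousOn_comp_const_sub (hg : ContinuousOn g {0}ᶜ) (hx : x ∉ Ω) :
    ContinuousOn (fun y => g (x - y)) Ω :=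
  hg.comp (by fun_prop) fun _ hy => sub_ne_zero.2 (ne_of_mem_of_not_mem hy hx).symm

theorem notMem_closure_sdiff_ball (hx : x ∈ ball z ε) : x ∉ closure (Ω \ ball z ε) := fun h =>
  closure_minimal (fun _ hy => hy.2) isOpen_ball.isClosed_compl h hx

variable [NormedSpace ℝ E] [FiniteDimensional ℝ E]

theorem exists_eventually_norm_comp_sub_le (hg : ContinuousOn g {0}ᶜ) (hΩ : Bornology.IsBounded Ω)
    (hx : x ∉ closure Ω) : ∃ M, ∀ᶠ x' in 𝓝 x, ∀ y ∈ Ω, ‖g (x' - y)‖ ≤ M := by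
  obtain ⟨δ, δ_pos, disjoint⟩ :=
    nhds_basis_closedBall.mem_iff.1 (isClosed_closure.isOpen_compl.mem_nhds hx)
  have continuousOn_sub :
      ContinuousOn (fun q : E × E => g (q.1 - q.2)) (closedBall x δ ×ˢ closure Ω) :=
    hg.comp (by fun_prop) fun q hq =>
      sub_ne_zero.2 (ne_of_mem_of_not_mem hq.2 (disjoint hq.1)).symm
  obtain ⟨M, hM⟩ := ((isCompact_closedBall x δ).prod
    hΩ.isCompact_closure).exists_bound_of_continuousOn continuousOn_sub
  refine ⟨M, ?_⟩
  filter_upwards [closedBall_mem_nhds x δ_pos] with x' hx' y hy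
  exact hM (x', y) ⟨hx', subset_closure hy⟩

variable [NormedSpace ℝ F] [MeasurableSpace E] [BorelSpace E] {μ : Measure E} {f : E → ℝ}

theorem integrableOn_smul_comp_const_sub (hg : ContinuousOn g {0}ᶜ) (hΩ : Bornology.IsBounded Ω)
    (hΩ_meas : MeasurableSet Ω) (hf : IntegrableOn f Ω μ) (hx : x ∉ closure Ω) :
    IntegrableOn (fun y => f y • g (x - y)) Ω μ := by
  obtain ⟨M, hM⟩ := exists_eventually_norm_comp_sub_le hg hΩ hx
  exact hf.smul_bdd M
    ((continuousOn_comp_const_sub hg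
      (notMem_subset subset_closure hx)).aestronglyMeasurable hΩ_meas)
    (ae_restrict_of_forall_mem hΩ_meas hM.self_of_nhds)

theorem hasFDerivAt_setIntegral_smul_comp_sub (hg : ContDiffOn ℝ 1 g {0}ᶜ)
    (hΩ : Bornology.IsBounded Ω) (hΩ_meas : MeasurableSet Ω) (hf : IntegrableOn f Ω μ)
    (hx : x ∉ closure Ω) :
    HasFDerivAt (fun x => ∫ y in Ω, f y • g (x - y) ∂μ)
      (∫ y in Ω, f y • fderiv ℝ g (x - y) ∂μ) x := by
  have hg' := hg.continuousOn_fderiv_of_isOpen isOpen_compl_singleton le_rfl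
  obtain ⟨M, hM⟩ := exists_eventually_norm_comp_sub_le hg' hΩ hx
  have off_closure := isClosed_closure.isOpen_compl.mem_nhds hx
  refine hasFDerivAt_integral_of_dominated_of_fderiv_le (𝕜 := ℝ) (μ := μ.restrict Ω)
    (F := fun x y => f y • g (x - y)) (F' := fun x y => f y • fderiv ℝ g (x - y))
    (bound := fun y => ‖f y‖ * M)
    (Filter.inter_mem off_closure hM) ?_
    (integrableOn_smul_comp_const_sub hg.continuousOn hΩ hΩ_meas hf hx)
    (integrableOn_smul_comp_const_sub hg' hΩ hΩ_meas hf hx).aestronglyMeasurable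
    (ae_restrict_of_forall_mem hΩ_meas fun y hy x' hx' => ?_) (hf.norm.mul_const M)
    (ae_restrict_of_forall_mem hΩ_meas fun y hy x' hx' => ?_)
  · filter_upwards [off_closure] with x' hx'
    exact (integrableOn_smul_comp_const_sub hg.continuousOn hΩ hΩ_meas hf hx').aestronglyMeasurable
  · rw [norm_smul]
    exact mul_le_mul_of_nonneg_left (hx'.2 y hy) (norm_nonneg _)
  · have ne : x' - y ≠ 0 := sub_ne_zero.2 (ne_of_mem_of_not_mem (subset_closure hy) hx'.1).symm
    have hg_at := (hg.contDiffAt (isOpen_compl_singleton.mem_nhds ne)).differentiableAt one_ne_zero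
    exact ((hasFDerivAt_comp_sub _).2 hg_at.hasFDerivAt).const_smul (f y)

theorem iteratedFDeriv_setIntegral_smul_comp_sub (hg : ContDiffOn ℝ ∞ g {0}ᶜ)
    (hΩ : Bornology.IsBounded Ω) (hΩ_meas : MeasurableSet Ω) (hf : IntegrableOn f Ω μ) (m : ℕ)
    (hx : x ∉ closure Ω) :
    iteratedFDeriv ℝ m (fun x => ∫ y in Ω, f y • g (x - y) ∂μ) x =
      ∫ y in Ω, f y • iteratedFDeriv ℝ m g (x - y) ∂μ := by
  induction m generalizing x with
  | zero =>
    simp only [iteratedFDeriv_zero_eq_comp, Function.comp_apply, ← map_smul]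
    exact ((continuousMultilinearCurryFin0 ℝ E
      F).symm.toContinuousLinearEquiv.integral_comp_comm _).symm
  | succ m ih =>
    have eventually_eq : iteratedFDeriv ℝ m (fun x => ∫ y in Ω, f y • g (x - y) ∂μ) =ᶠ[𝓝 x]
        fun x => ∫ y in Ω, f y • iteratedFDeriv ℝ m g (x - y) ∂μ := by
      filter_upwards [isClosed_closure.isOpen_compl.mem_nhds hx] with x' hx' using ih hx'
    have iterated_contDiffOn : ContDiffOn ℝ 1 (iteratedFDeriv ℝ m g) {0}ᶜ := fun w hw =>
      ((hg.contDiffAt (isOpen_compl_singleton.mem_nhds hw)).iteratedFDeriv_right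
        (mod_cast le_top)).contDiffWithinAt
    simp only [iteratedFDeriv_succ_eq_comp_left, Function.comp_apply, ← map_smul]
    rw [eventually_eq.fderiv_eq, (hasFDerivAt_setIntegral_smul_comp_sub iterated_contDiffOn hΩ
      hΩ_meas hf hx).fderiv]
    exact (ContinuousLinearEquiv.integral_comp_comm (𝕜 := ℝ) (μ := μ.restrict Ω)
      (E := E →L[ℝ] E [×m]→L[ℝ] F) (F := E [×(m + 1)]→L[ℝ] F)
      (continuousMultilinearCurryLeftEquiv ℝ (fun _ => E) F).symm.toContinuousLinearEquiv _).symm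

variable [IsLocallyFiniteMeasure μ]

theorem integrableOn_ball (hf : Continuous f) : IntegrableOn f (ball c R) μ :=
  (hf.continuousOn.integrableOn_compact (isCompact_closedBall c R)).mono_set ball_subset_closedBall

theorem integrableOn_ball_sdiff_smul_comp_const_sub (hg : ContinuousOn g {0}ᶜ) (hf : Continuous f)
    (hx : x ∈ ball z ε) :
    IntegrableOn (fun y => f y • g (x - y)) (ball c R \ ball z ε) μ :=
  integrableOn_smul_comp_const_sub hg (isBounded_ball.subset sdiff_subset)
    (measurableSet_ball.diff measurableSet_ball) ((integrableOn_ball hf).mono_set sdiff_subset)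
    (notMem_closure_sdiff_ball hx)

theorem iteratedFDeriv_setIntegral_ball_sdiff_smul_comp_sub (hg : ContDiffOn ℝ ∞ g {0}ᶜ)
    (hf : Continuous f) (m : ℕ) (hx : x ∈ ball z ε) :
    iteratedFDeriv ℝ m (fun x => ∫ y in ball c R \ ball z ε, f y • g (x - y) ∂μ) x =
      ∫ y in ball c R \ ball z ε, f y • iteratedFDeriv ℝ m g (x - y) ∂μ :=
  iteratedFDeriv_setIntegral_smul_comp_sub hg (isBounded_ball.subset sdiff_subset)
    (measurableSet_ball.diff measurableSet_ball) ((integrableOn_ball hf).mono_set sdiff_subset) m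
    (notMem_closure_sdiff_ball hx)

end DifferentiationUnderTheIntegral

section HomogeneousPotential

/-- Integration of continuous functions on a compact space, as a continuous linear form: it is what
carries `HasDegreeLT` from `C(X, ℝ)`-valued maps to real-valued ones. -/
def integralCLM {X : Type*} [TopologicalSpace X] [CompactSpace X] [MeasurableSpace X]
    [BorelSpace X] (μ : Measure X) [IsFiniteMeasure μ] : C(X, ℝ) →L[ℝ] ℝ :=
  L1.integralCLM ∘L ContinuousMap.toLp 1 μ ℝ

theorem integralCLM_apply {X : Type*} [TopologicalSpace X] [CompactSpace X] [MeasurableSpace X]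
    [BorelSpace X] (μ : Measure X) [IsFiniteMeasure μ] (φ : C(X, ℝ)) :
    integralCLM μ φ = ∫ ξ, φ ξ ∂μ :=
  (L1.integral_eq _).symm.trans <|
    (L1.integral_eq_integral _).trans (integral_congr_ae (ContinuousMap.coeFn_toLp μ φ))

variable {E : Type*} [NormedAddCommGroup E] [InnerProductSpace ℝ E] [FiniteDimensional ℝ E]
  [Nontrivial E] [MeasurableSpace E] [BorelSpace E] {μ : Measure E} [μ.IsAddHaarMeasure]
  {d : ℕ} {K f : E → ℝ} {c z x : E} {R ε : ℝ}

theorem setIntegral_mul_comp_const_sub_eq_integral_sphere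
    (hK_hom : ∀ r : ℝ, r ≠ 0 → ∀ w, K (r • w) = |r| ^ (2 - (finrank ℝ E : ℤ)) * K w)
    {Ω : Set E} (hΩ_meas : MeasurableSet Ω)
    (integrable : IntegrableOn (fun y => f y * K (x - y)) Ω μ) :
    ∫ y in Ω, f y * K (x - y) ∂μ = 2⁻¹ * ∫ ξ : sphere (0 : E) 1,
      K ξ * (∫ r in {r : ℝ | x + r • (ξ : E) ∈ Ω}, |r| * f (x + r • (ξ : E))) ∂μ.toSphere := by
  rw [← integral_indicator hΩ_meas, ← integral_add_left_eq_self _ x,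
    integral_eq_integral_sphere_integral_line
      ((integrable_indicator_iff hΩ_meas).2 integrable |>.comp_add_left x), smul_eq_mul]
  refine congrArg (2⁻¹ * ·) (integral_congr_ae (.of_forall fun ξ => ?_))
  dsimp only
  have line_meas : MeasurableSet {r : ℝ | x + r • (ξ : E) ∈ Ω} :=
    (by fun_prop : Measurable fun r : ℝ => x + r • (ξ : E)) hΩ_meas
  rw [← integral_indicator line_meas, ← integral_const_mul]
  refine integral_congr_ae ?_
  filter_upwards [Measure.ae_ne volume (0 : ℝ)] with r hr
  have weight : |r| ^ (finrank ℝ E - 1) * |r| ^ (2 - (finrank ℝ E : ℤ)) = |r| := by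
    rw [← zpow_natCast, ← zpow_add₀ (abs_ne_zero.2 hr),
      Nat.cast_sub (Nat.one_le_iff_ne_zero.2 finrank_pos.ne')]
    norm_num
  have kernel : K (x - (x + r • (ξ : E))) = |r| ^ (2 - (finrank ℝ E : ℤ)) * K ξ := by
    rw [sub_add_cancel_left, ← neg_smul, hK_hom _ (neg_ne_zero.2 hr), abs_neg]
  by_cases h : x + r • (ξ : E) ∈ Ω
  · rw [indicator_of_mem h, indicator_of_mem (show r ∈ {r : ℝ | x + r • (ξ : E) ∈ Ω} from h),
      kernel, smul_eq_mul]
    linear_combination f (x + r • (ξ : E)) * K ξ * weight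
  · rw [indicator_of_notMem h,
      indicator_of_notMem (show r ∉ {r : ℝ | x + r • (ξ : E) ∈ Ω} from h), smul_zero, mul_zero]

theorem HasDegreeLT.exists_potential (hf : HasDegreeLT d f) (hK : ContinuousOn K {0}ᶜ)
    (hK_hom : ∀ r : ℝ, r ≠ 0 → ∀ w, K (r • w) = |r| ^ (2 - (finrank ℝ E : ℤ)) * K w)
    (h_sub : ball z ε ⊆ ball c R) :
    ∃ P : E → ℝ, HasDegreeLT (d + 1) P ∧
      ∀ x ∈ ball z ε, ∫ y in ball c R \ ball z ε, f y * K (x - y) ∂μ = P x := by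
  obtain ⟨Φ, hΦ, hΦ_eq⟩ := hf.exists_integral_line_inter_ball_sub c z R ε
  let κ : C(sphere (0 : E) 1, ℝ) :=
    ⟨fun ξ => K ξ, hK.comp_continuous continuous_subtype_val fun ξ => ne_zero_of_mem_unit_sphere ξ⟩
  refine ⟨_, (hΦ.continuousLinearMap_comp
    (integralCLM μ.toSphere ∘L ContinuousLinearMap.mul ℝ _ κ)).const_smul 2⁻¹, fun x hx => ?_⟩
  rw [setIntegral_mul_comp_const_sub_eq_integral_sphere hK_hom
    (measurableSet_ball.diff measurableSet_ball)
    (integrableOn_ball_sdiff_smul_comp_const_sub hK hf.contDiff.continuous hx)]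
  simp only [setIntegral_line_sdiff hf.contDiff.continuous h_sub hx, hΦ_eq x ⟨h_sub hx, hx⟩,
    ContinuousLinearMap.comp_apply, integralCLM_apply, smul_eq_mul]
  rfl

theorem stmt_2_general (hK : ContDiffOn ℝ ∞ K {0}ᶜ)
    (hK_hom : ∀ r : ℝ, r ≠ 0 → ∀ w, K (r • w) = |r| ^ (2 - (finrank ℝ E : ℤ)) * K w)
    (hf : HasDegreeLT d f) {m : ℕ} (hm : d + 1 ≤ m) (h_sub : ball z ε ⊆ ball c R)
    (hx : x ∈ ball z ε) (u : Fin m → E) :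
    ∫ y in ball c R \ ball z ε, iteratedFDeriv ℝ m (fun w => K (w - y)) x u * f y ∂μ = 0 := by
  obtain ⟨P, hP, potential_eq⟩ := hf.exists_potential hK.continuousOn hK_hom h_sub (μ := μ)
  have potential_eventually_eq :
      (fun x => ∫ y in ball c R \ ball z ε, f y • K (x - y) ∂μ) =ᶠ[𝓝 x] P := by
    filter_upwards [isOpen_ball.mem_nhds hx] using potential_eq
  have hK_iterated : ContinuousOn (iteratedFDeriv ℝ m K) {0}ᶜ := fun w hw =>
    ((hK.contDiffAt (isOpen_compl_singleton.mem_nhds hw)).iteratedFDeriv_right (m := 0)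
      (mod_cast le_top)).continuousAt.continuousWithinAt
  calc ∫ y in ball c R \ ball z ε, iteratedFDeriv ℝ m (fun w => K (w - y)) x u * f y ∂μ
    _ = ∫ y in ball c R \ ball z ε, (f y • iteratedFDeriv ℝ m K (x - y)) u ∂μ := by
      simp only [iteratedFDeriv_comp_sub, smul_apply, smul_eq_mul, mul_comm]
    _ = (∫ y in ball c R \ ball z ε, f y • iteratedFDeriv ℝ m K (x - y) ∂μ) u :=
      (ContinuousMultilinearMap.integral_apply
        (integrableOn_ball_sdiff_smul_comp_const_sub hK_iterated hf.contDiff.continuous hx) u).symm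
    _ = 0 := by
      rw [← iteratedFDeriv_setIntegral_ball_sdiff_smul_comp_sub hK hf.contDiff.continuous m hx,
        (potential_eventually_eq.iteratedFDeriv ℝ m).eq_of_nhds, hP.iteratedFDeriv_eq_zero m hm,
        zero_apply]

end HomogeneousPotential

theorem contDiffOn_fundSol (n : ℕ) : ContDiffOn ℝ ∞ (fundSol n) {0}ᶜ := fun _ hw =>
  (contDiffAt_const.mul ((contDiffAt_norm ℝ hw).rpow_const_of_ne
    (norm_ne_zero_iff.2 hw))).contDiffWithinAt

theorem fundSol_smul {n : ℕ} {r : ℝ} (w : EuclideanSpace ℝ (Fin n)) :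
    fundSol n (r • w) = |r| ^ (2 - (n : ℤ)) * fundSol n w := by
  rw [fundSol, fundSol, norm_smul, Real.norm_eq_abs, Real.mul_rpow (abs_nonneg r) (norm_nonneg w),
    ← Real.rpow_intCast]
  push_cast
  ring

theorem hasDegreeLT_mvPolynomial_eval {n k : ℕ} {p : MvPolynomial (Fin n) ℝ}
    (hp : p.totalDegree ≤ k) :
    HasDegreeLT (k + 1) (fun y : EuclideanSpace ℝ (Fin n) => p.eval fun i => y i) :=
  (HasDegreeLT.mvPolynomial_eval (E := EuclideanSpace ℝ (Fin n))
    (fun i => EuclideanSpace.proj (𝕜 := ℝ) i) p).mono (Nat.succ_le_succ hp)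

theorem stmt_2 (n k m : ℕ) (hn : 3 ≤ n) (hm : k + 2 ≤ m) (R ε : ℝ) (hR : 0 < R)
    (hε : 0 < ε) (v : Fin m → Fin n) (p : MvPolynomial (Fin n) ℝ)
    (hp : p.totalDegree ≤ k) (z : EuclideanSpace ℝ (Fin n))
    (hz : closedBall z ε ⊆ ball (0 : EuclideanSpace ℝ (Fin n)) R)
    (x : EuclideanSpace ℝ (Fin n)) (hx : x ∈ ball z ε) :
    (∫ y in ball (0 : EuclideanSpace ℝ (Fin n)) R \ ball z ε,
        (iteratedFDeriv ℝ m (fun w => fundSol n (w - y)) x fun i => ee (v i)) *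
          MvPolynomial.eval (fun i => y i) p) = 0 := by
  have : Nonempty (Fin n) := ⟨⟨0, by lia⟩⟩
  exact stmt_2_general (contDiffOn_fundSol n) (fun r _ w => by simpa using fundSol_smul w)
    (hasDegreeLT_mvPolynomial_eval hp) hm (ball_subset_closedBall.trans hz) hx _
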